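/- The system is rigid along the height sequence: for every σ-invariant Borel probability measure μ on X and every Borel set A ⊆ X, μ(σ^{h k}(A) Δ A) → 0 as k → ∞, where Δ denotes symmetric difference. -/

import Mathlib

open MeasureTheory Filter Topology
open scoped ENNReal

/-- `m`-fold concatenation of a word. -/
def wordPow (w : List ℕ) (m : ℕ) : List ℕ := (List.replicate m w).flatten

/-- The words of the generalized del Junco–Rudolph construction:
`B 0 = [0]`, `B (k+1) = (B k)^(a·b^k) ++ [1] ++ (B k)^((b-a)·b^k)`. -/
def Bword (b a : ℕ) : ℕ → List ℕ
  | 0 => [0]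
  | k + 1 => wordPow (Bword b a k) (a * b ^ k) ++ [1] ++ wordPow (Bword b a k) ((b - a) * b ^ k)

/-- The height sequence: `h 0 = 1`, `h (k+1) = b^(k+1) * h k + 1`. -/
def hseq (b : ℕ) : ℕ → ℕ
  | 0 => 1
  | k + 1 => b ^ (k + 1) * hseq b k + 1

/-- The word `w` occurs in the word `v` at position `p` (0-based). -/
def OccursAt (w v : List ℕ) (p : ℕ) : Prop :=
  p + w.length ≤ v.length ∧ (v.drop p).take w.length = w

/-- The block of `x` of length `w.length` starting at index `m` equals the word `w`. -/
def BlockEq (x : ℤ → ℕ) (m : ℤ) (w : List ℕ) : Prop :=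
  ∀ i : ℕ, i < w.length → x (m + i) = w.getD i 0

/-- Membership in the subshift `X`: every finite block of `x` occurs as a consecutive
subword of some `B k`. -/
def InX (b a : ℕ) (x : ℤ → ℕ) : Prop :=
  ∀ (m : ℤ) (l : ℕ), ∃ k p, OccursAt (List.ofFn fun i : Fin l => x (m + (i : ℕ))) (Bword b a k) p

/-- The left shift `(σ x) n = x (n+1)` on `{0,1}^ℤ`. -/
def shiftMap (x : ℤ → ℕ) : ℤ → ℕ := fun n => x (n + 1)

def GoodW (h G : ℕ) (u w : List ℕ) : Prop :=
  ∃ S : Set ℕ, (∀ i, i + h < w.length → w.getD i 0 ≠ w.getD (i + h) 0 →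
      ∃ s ∈ S, i ≤ s ∧ s ≤ i + h) ∧
    (∀ s ∈ S, ∀ t ∈ S, s < t → s + G < t) ∧
    (∀ s ∈ S, G ≤ s ∧ s + G < w.length) ∧ h ≤ w.length ∧
    (∀ i < h, w.getD i 0 = u.getD i 0) ∧
    (∀ i < h, w.getD (w.length - h + i) 0 = u.getD i 0)

lemma GoodW.self (G : ℕ) (u : List ℕ) : GoodW u.length G u u := by
  refine ⟨∅, ?_, ?_, ?_, le_rfl, ?_, ?_⟩
  · intro i hi; omega
  · simp
  · simp
  · simp
  · simp

lemma getD_app (w₁ w₂ : List ℕ) (i : ℕ) :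
    (w₁ ++ w₂).getD i 0 = if i < w₁.length then w₁.getD i 0 else w₂.getD (i - w₁.length) 0 := by
  split_ifs with h
  · exact List.getD_append _ _ _ _ h
  · exact List.getD_append_right _ _ _ _ (by omega)

lemma GoodW.append {h G : ℕ} {u w₁ w₂ : List ℕ} (h₁ : GoodW h G u w₁) (h₂ : GoodW h G u w₂) :
    GoodW h G u (w₁ ++ w₂) := by
  obtain ⟨S, a1, a2, a3, a4, a5, a6⟩ := h₁
  obtain ⟨T, b1, b2, b3, b4, b5, b6⟩ := h₂
  refine ⟨S ∪ {n | ∃ t ∈ T, n = w₁.length + t}, ?_, ?_, ?_, ?_, ?_, ?_⟩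
  · intro i hi hne
    rw [List.length_append] at hi
    rw [getD_app, getD_app] at hne
    by_cases c1 : i + h < w₁.length
    · rw [if_pos (by omega), if_pos c1] at hne
      obtain ⟨s, hs, h1, h2⟩ := a1 i c1 hne
      exact ⟨s, Or.inl hs, h1, h2⟩
    · by_cases c2 : i < w₁.length
      · rw [if_pos c2, if_neg c1] at hne
        exfalso; apply hne
        have := a6 (i + h - w₁.length) (by omega)
        rw [b5 _ (by omega), ← this]
        congr 1; omega
      · rw [if_neg c2, if_neg c1] at hne
        obtain ⟨s, hs, h1, h2⟩ := b1 (i - w₁.length) (by omega)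
          (by convert hne using 2; omega)
        exact ⟨w₁.length + s, Or.inr ⟨s, hs, rfl⟩, by omega, by omega⟩
  · rintro s (hs | ⟨s, hs, rfl⟩) t (ht | ⟨t, ht, rfl⟩) hst
    · exact a2 s hs t ht hst
    · have := a3 s hs; omega
    · have := a3 t ht; omega
    · have := b2 s hs t ht (by omega); omega
  · rintro s (hs | ⟨s, hs, rfl⟩)
    · have := a3 s hs; rw [List.length_append]; omega
    · have := b3 s hs; rw [List.length_append]; omega
  · rw [List.length_append]; omega
  · intro i hi
    rw [getD_app, if_pos (by omega)]; exact a5 i hi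
  · intro i hi
    rw [getD_app, List.length_append, if_neg (by omega), ← b6 i hi]
    congr 1; omega

lemma GoodW.join {h G : ℕ} {u w₁ w₂ : List ℕ} (h₁ : GoodW h G u w₁) (h₂ : GoodW h G u w₂)
    (l₁ : G ≤ w₁.length) (l₂ : G ≤ w₂.length) :
    GoodW h G u (w₁ ++ [1] ++ w₂) := by
  obtain ⟨S, a1, a2, a3, a4, a5, a6⟩ := h₁
  obtain ⟨T, b1, b2, b3, b4, b5, b6⟩ := h₂
  have hl : (w₁ ++ [1]).length = w₁.length + 1 := by simp
  have hl' : (w₁ ++ [1] ++ w₂).length = w₁.length + 1 + w₂.length := by simp; omega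
  refine ⟨S ∪ {n | n = w₁.length ∨ ∃ t ∈ T, n = w₁.length + 1 + t}, ?_, ?_, ?_, ?_, ?_, ?_⟩
  · intro i hi hne
    rw [hl'] at hi
    rw [getD_app, getD_app, getD_app, getD_app, hl] at hne
    by_cases c1 : i + h < w₁.length
    · rw [if_pos (by omega), if_pos (by omega), if_pos (by omega), if_pos c1] at hne
      obtain ⟨s, hs, h1, h2⟩ := a1 i c1 hne
      exact ⟨s, Or.inl hs, h1, h2⟩
    · by_cases c2 : i ≤ w₁.length
      · exact ⟨w₁.length, Or.inr (Or.inl rfl), by omega, by omega⟩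
      · rw [if_neg (by omega), if_neg (by omega)] at hne
        obtain ⟨s, hs, h1, h2⟩ := b1 (i - (w₁.length + 1)) (by omega)
          (by convert hne using 2; omega)
        exact ⟨w₁.length + 1 + s, Or.inr (Or.inr ⟨s, hs, rfl⟩), by omega, by omega⟩
  · rintro s (hs | rfl | ⟨s, hs, rfl⟩) t (ht | rfl | ⟨t, ht, rfl⟩) hst
    · exact a2 s hs t ht hst
    · have := a3 s hs; omega
    · have := a3 s hs; omega
    · have := a3 t ht; omega
    · omega
    · have := b3 t ht; omega
    · have := a3 t ht; omega
    · omega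
    · have := b2 s hs t ht (by omega); omega
  · rw [hl']
    rintro s (hs | rfl | ⟨s, hs, rfl⟩)
    · have := a3 s hs; omega
    · omega
    · have := b3 s hs; omega
  · omega
  · intro i hi
    rw [getD_app, if_pos (by omega), getD_app, if_pos (by omega)]; exact a5 i hi
  · intro i hi
    rw [getD_app, hl', hl, if_neg (by omega), ← b6 i hi]
    congr 1; omega

lemma wordPow_succ (w : List ℕ) (m : ℕ) : wordPow w (m + 1) = w ++ wordPow w m := by
  simp [wordPow, List.replicate_succ]

lemma wordPow_length (w : List ℕ) (m : ℕ) : (wordPow w m).length = m * w.length := by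
  simp [wordPow]

lemma GoodW.pow {h G : ℕ} {u w : List ℕ} (h₁ : GoodW h G u w) (m : ℕ) (hm : 1 ≤ m) :
    GoodW h G u (wordPow w m) := by
  induction m, hm using Nat.le_induction with
  | base => simpa [wordPow] using h₁
  | succ m hm ih => rw [wordPow_succ]; exact h₁.append ih

lemma Bword_length (b a : ℕ) (hab : a ≤ b) (k : ℕ) : (Bword b a k).length = hseq b k := by
  induction k with
  | zero => rfl
  | succ k ih =>
    obtain ⟨c, rfl⟩ := Nat.exists_eq_add_of_le hab
    simp only [Bword, hseq, List.length_append, wordPow_length, ih, List.length_singleton,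
      Nat.add_sub_cancel_left]
    ring

lemma hseq_mono (b : ℕ) (hb : 2 ≤ b) : Monotone (hseq b) := by
  refine monotone_nat_of_le_succ fun k => ?_
  simp only [hseq]
  have : 1 ≤ b ^ (k + 1) := Nat.one_le_pow _ _ (by omega)
  nlinarith

lemma hseq_pos (b k : ℕ) : 1 ≤ hseq b k := by
  cases k <;> simp [hseq]

lemma good_Bword (b a : ℕ) (hb : 2 ≤ b) (ha1 : 1 ≤ a) (ha2 : a ≤ b - 1) (k K : ℕ) (hK : k ≤ K) :
    GoodW (hseq b k) (b ^ k * hseq b k) (Bword b a k) (Bword b a K) := by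
  induction K, hK using Nat.le_induction with
  | base =>
    have := GoodW.self (b ^ k * hseq b k) (Bword b a k)
    rwa [Bword_length b a (by omega)] at this
  | succ K hK ih =>
    have hp : 1 ≤ b ^ K := Nat.one_le_pow _ _ (by omega)
    have hle : b ^ k * hseq b k ≤ b ^ K * hseq b K :=
      Nat.mul_le_mul (Nat.pow_le_pow_right (by omega) hK) (hseq_mono b hb hK)
    have key : ∀ c, 1 ≤ c → b ^ K * hseq b K ≤ c * b ^ K * hseq b K := fun c hc => by
      rw [mul_assoc]; exact Nat.le_mul_of_pos_left _ hc
    refine GoodW.join (ih.pow _ (Nat.mul_pos ha1 hp)) (ih.pow _ (Nat.mul_pos (by omega) hp)) ?_ ?_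
    · rw [wordPow_length, Bword_length b a (by omega)]; exact hle.trans (key _ ha1)
    · rw [wordPow_length, Bword_length b a (by omega)]; exact hle.trans (key _ (by omega))

lemma occ_getD (l : ℕ) (f : ℕ → ℕ) (v : List ℕ) (p : ℕ)
    (H : OccursAt (List.ofFn fun i : Fin l => f i) v p) :
    p + l ≤ v.length ∧ ∀ t < l, v.getD (p + t) 0 = f t := by
  obtain ⟨h1, h2⟩ := H
  rw [List.length_ofFn] at h1 h2
  refine ⟨h1, fun t ht => ?_⟩
  have := congrArg (fun L => L[t]?) h2
  simp only [List.getElem?_take, ht, if_true, List.getElem?_drop, List.getElem?_ofFn, dif_pos] at this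
  simp [List.getD, this]

lemma no_close (b a : ℕ) (hb : 2 ≤ b) (ha1 : 1 ≤ a) (ha2 : a ≤ b - 1) (k : ℕ) (x : ℤ → ℕ)
    (hx : InX b a x) (i : ℤ) (d : ℕ) (hd : hseq b k < d)
    (hd2 : d + hseq b k ≤ b ^ k * hseq b k) (h1 : x i ≠ x (i + hseq b k))
    (h2 : x (i + d) ≠ x (i + d + hseq b k)) : False := by
  obtain ⟨K, p, H⟩ := hx i (d + hseq b k + 1)
  obtain ⟨e1, e2⟩ := occ_getD _ (fun t => x (i + (t : ℕ))) _ _ H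
  have hK : k ≤ K := by
    by_contra hc
    have := hseq_mono b hb (show K ≤ k by omega)
    rw [Bword_length b a (by omega)] at e1
    omega
  obtain ⟨S, a1, a2, a3, -⟩ := good_Bword b a hb ha1 ha2 k K hK
  have f0 := e2 0 (by omega)
  have f1 := e2 (hseq b k) (by omega)
  have f2 := e2 d (by omega)
  have f3 := e2 (d + hseq b k) (by omega)
  simp only [Nat.cast_zero, add_zero, Nat.cast_add, ← add_assoc] at f0 f1 f2 f3
  obtain ⟨s, hs, s1, s2⟩ := a1 p (by omega) (by rw [f0, f1]; exact h1)
  obtain ⟨t, ht, t1, t2⟩ := a1 (p + d) (by omega) (by rw [f2, f3]; exact h2)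
  have := a2 s hs t ht (by omega)
  omega

lemma iter_shift (n : ℕ) (x : ℤ → ℕ) : shiftMap^[n] x = fun i => x (i + n) := by
  induction n generalizing x with
  | zero => simp
  | succ n ih =>
    rw [Function.iterate_succ_apply, ih]; funext i; simp only [shiftMap]; congr 1; push_cast; ring

lemma mismatch_bound (b a : ℕ) (hb : 2 ≤ b) (ha1 : 1 ≤ a) (ha2 : a ≤ b - 1)
    (μ : Measure (ℤ → ℕ)) (hprob : IsProbabilityMeasure μ)
    (hsupp : μ {y | InX b a y}ᶜ = 0) (hinv : MeasurePreserving shiftMap μ μ) (n : ℤ) (k : ℕ) :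
    (k : ℝ≥0∞) * μ {x | x n ≠ x (n + hseq b k)} ≤ 1 := by
  set h := hseq b k with hh
  have hm : ∀ m : ℤ, MeasurableSet {x : ℤ → ℕ | x m ≠ x (m + h)} := fun m =>
    (measurableSet_eq_fun (measurable_pi_apply m) (measurable_pi_apply (m + h))).compl
  let E : ℕ → Set (ℤ → ℕ) := fun j => {x | x (n + (j * (h + 1) : ℕ)) ≠ x (n + (j * (h + 1) : ℕ) + h)}
  have hE : ∀ j, μ (E j) = μ {x | x n ≠ x (n + h)} := fun j => by
    rw [← (hinv.iterate (j * (h + 1))).measure_preimage (hm n).nullMeasurableSet]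
    congr 1
    ext x
    simp only [E, Set.mem_preimage, Set.mem_setOf_eq, iter_shift]
    rw [show n + ((j * (h + 1) : ℕ) : ℤ) + h = n + h + ((j * (h + 1) : ℕ) : ℤ) by ring]
  have hpos : 1 ≤ h := hseq_pos b k
  have hpow : ∀ k : ℕ, 2 * k ≤ 2 ^ k + 1 := by
    intro k
    induction k with
    | zero => simp
    | succ k ih =>
      rcases Nat.lt_or_ge k 1 with h | h
      · interval_cases k; simp
      · have : 2 ^ 1 ≤ 2 ^ k := Nat.pow_le_pow_right (by omega) h
        rw [pow_succ]; omega
  have hbk : 2 * k ≤ b ^ k + 1 := (hpow k).trans (by gcongr)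
  have dis : ∀ i j : ℕ, i < j → j < k → μ (E i ∩ E j) = 0 := by
    intro i j hij hjk
    refine measure_mono_null ?_ hsupp
    rintro x ⟨hi, hj⟩ hx
    obtain ⟨e, rfl⟩ := Nat.exists_eq_add_of_lt hij
    refine no_close b a hb ha1 ha2 k x hx (n + (i * (h + 1) : ℕ)) ((e + 1) * (h + 1)) ?_ ?_ hi ?_
    · rw [← hh]; nlinarith
    · rw [← hh]
      have : 2 * (e + 2) ≤ b ^ k + 1 := by omega
      calc (e + 1) * (h + 1) + h ≤ (2 * e + 3) * h := by nlinarith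
        _ ≤ b ^ k * h := Nat.mul_le_mul_right _ (by omega)
    · rw [← hh]
      simp only [E, Set.mem_setOf_eq] at hj
      have e1 : n + ((i * (h + 1) : ℕ) : ℤ) + (((e + 1) * (h + 1) : ℕ) : ℤ) =
          n + (((i + e + 1) * (h + 1) : ℕ) : ℤ) := by push_cast; ring
      rw [e1]; exact hj
  calc (k : ℝ≥0∞) * μ {x | x n ≠ x (n + h)} = ∑ j ∈ Finset.range k, μ (E j) := by
        simp [hE]
    _ = μ (⋃ j ∈ Finset.range k, E j) := by
        symm
        apply measure_biUnion_finset₀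
        · intro i hi j hj hij
          simp only [Finset.coe_range, Set.mem_Iio] at hi hj
          rcases lt_or_gt_of_ne hij with h | h
          · exact dis i j h hj
          · have := dis j i h hi
            rw [Set.inter_comm] at this
            exact this
        · exact fun j _ => (hm _).nullMeasurableSet
    _ ≤ 1 := prob_le_one

lemma mismatch_tendsto (b a : ℕ) (hb : 2 ≤ b) (ha1 : 1 ≤ a) (ha2 : a ≤ b - 1)
    (μ : Measure (ℤ → ℕ)) (hprob : IsProbabilityMeasure μ)
    (hsupp : μ {y | InX b a y}ᶜ = 0) (hinv : MeasurePreserving shiftMap μ μ) (n : ℤ) :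
    Tendsto (fun k => μ {x | x n ≠ x (n + hseq b k)}) atTop (𝓝 0) := by
  refine tendsto_of_tendsto_of_tendsto_of_le_of_le tendsto_const_nhds
    ENNReal.tendsto_inv_nat_nhds_zero (fun _ => zero_le) fun k => ?_
  have := mismatch_bound b a hb ha1 ha2 μ hprob hsupp hinv n k
  rw [mul_comm] at this
  show _ ≤ (k : ℝ≥0∞)⁻¹
  exact ENNReal.le_inv_iff_mul_le.2 this

lemma pre_tendsto (b : ℕ)
    (μ : Measure (ℤ → ℕ)) (hprob : IsProbabilityMeasure μ) (hinv : MeasurePreserving shiftMap μ μ)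
    (hmis : ∀ n : ℤ, Tendsto (fun k => μ {x | x n ≠ x (n + hseq b k)}) atTop (𝓝 0))
    (A : Set (ℤ → ℕ)) (hA : MeasurableSet A) :
    Tendsto (fun k => μ (symmDiff (shiftMap^[hseq b k] ⁻¹' A) A)) atTop (𝓝 0) := by
  let Q : Set (ℤ → ℕ) → Prop := fun A => MeasurableSet A ∧
    Tendsto (fun k => μ (symmDiff (shiftMap^[hseq b k] ⁻¹' A) A)) atTop (𝓝 0)
  have Qempty : Q ∅ := ⟨MeasurableSet.empty, by simp⟩
  have Qunion : ∀ s t, Q s → Q t → Q (s ∪ t) := by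
    rintro s t ⟨hs, hs'⟩ ⟨ht, ht'⟩
    refine ⟨hs.union ht, ?_⟩
    have := hs'.add ht'
    rw [add_zero] at this
    refine tendsto_of_tendsto_of_tendsto_of_le_of_le tendsto_const_nhds this (fun _ => zero_le)
      fun k => ?_
    refine le_trans (measure_mono ?_) (measure_union_le _ _)
    intro x
    simp only [Set.mem_symmDiff, Set.mem_union, Set.mem_preimage]
    tauto
  have Qi : ∀ f : ℕ → Set (ℤ → ℕ), (∀ i, Q (f i)) → Q (⋃ i, f i) := by
    intro f hf
    have hmeas : MeasurableSet (⋃ i, f i) := MeasurableSet.iUnion fun i => (hf i).1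
    refine ⟨hmeas, ?_⟩
    have hacc : ∀ n, Q (Set.accumulate f n) := by
      intro n
      induction n with
      | zero => simpa using hf 0
      | succ n ih => rw [Set.accumulate_succ]; exact Qunion _ _ ih (hf _)
    have hsub : ∀ n, Set.accumulate f n ⊆ ⋃ i, f i := Set.accumulate_subset_iUnion
    have hR : Tendsto (fun n => μ ((⋃ i, f i) \ Set.accumulate f n)) atTop (𝓝 0) := by
      have h0 : ⋂ n, ((⋃ i, f i) \ Set.accumulate f n) = ∅ := by
        rw [← Set.diff_iUnion, Set.iUnion_accumulate, Set.diff_self]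
      rw [← measure_empty (μ := μ), ← h0]
      refine tendsto_measure_iInter_atTop (fun n => (hmeas.diff (hacc n).1).nullMeasurableSet) ?_
        ⟨0, measure_ne_top _ _⟩
      intro m n hmn
      exact Set.diff_subset_diff_right (Set.monotone_accumulate hmn)
    rw [ENNReal.tendsto_nhds_zero]
    intro ε hε
    have hε3 : 0 < ε / 3 := ENNReal.div_pos hε.ne' (by simp)
    obtain ⟨n, hn⟩ := ((ENNReal.tendsto_nhds_zero.1 hR) _ hε3).exists
    filter_upwards [(ENNReal.tendsto_nhds_zero.1 (hacc n).2) _ hε3] with k hk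
    set C := Set.accumulate f n
    set U := ⋃ i, f i
    have hpre : μ (shiftMap^[hseq b k] ⁻¹' (U \ C)) = μ (U \ C) :=
      (hinv.iterate _).measure_preimage (hmeas.diff (hacc n).1).nullMeasurableSet
    calc μ (symmDiff (shiftMap^[hseq b k] ⁻¹' U) U)
        ≤ μ ((symmDiff (shiftMap^[hseq b k] ⁻¹' C) C ∪ (U \ C)) ∪
            shiftMap^[hseq b k] ⁻¹' (U \ C)) := by
          refine measure_mono ?_
          intro x
          have u1 := @hsub n x
          have u2 := @hsub n (shiftMap^[hseq b k] x)
          simp only [Set.mem_symmDiff, Set.mem_union, Set.mem_preimage, Set.mem_diff]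
          tauto
      _ ≤ ε / 3 + ε / 3 + ε / 3 := by
          refine (measure_union_le _ _).trans ?_
          gcongr
          · refine (measure_union_le _ _).trans ?_
            gcongr
          · rw [hpre]; exact hn
      _ = ε := ENNReal.add_thirds ε
  let m' : MeasurableSpace (ℤ → ℕ) :=
    { MeasurableSet' := Q
      measurableSet_empty := Qempty
      measurableSet_compl := by
        rintro s ⟨hs, hs'⟩
        refine ⟨hs.compl, ?_⟩
        convert hs' using 3
        ext x
        simp only [Set.mem_symmDiff, Set.mem_compl_iff, Set.mem_preimage]
        tauto
      measurableSet_iUnion := Qi }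
  have hle : (MeasurableSpace.pi : MeasurableSpace (ℤ → ℕ)) ≤ m' := by
    refine iSup_le fun n => ?_
    rintro _ ⟨s, hs, rfl⟩
    refine ⟨measurable_pi_apply n hs, ?_⟩
    refine tendsto_of_tendsto_of_tendsto_of_le_of_le tendsto_const_nhds (hmis n)
      (fun _ => zero_le) fun k => measure_mono ?_
    intro x hx hxn
    simp only [Set.mem_symmDiff, Set.mem_preimage, iter_shift] at hx
    rw [← hxn] at hx
    tauto
  exact (hle A hA).2

/-- rigidity along the heights: for every invariant Borel probability measure
`μ` on `X` and every Borel set `A`, `μ (σ^{h k} A ∆ A) → 0`. -/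
theorem rigid_along_heights (b a : ℕ) (hb : 2 ≤ b) (ha1 : 1 ≤ a) (ha2 : a ≤ b - 1)
    (μ : Measure (ℤ → ℕ)) (hprob : IsProbabilityMeasure μ)
    (hsupp : μ {y | InX b a y}ᶜ = 0) (hinv : MeasurePreserving shiftMap μ μ)
    (A : Set (ℤ → ℕ)) (hA : MeasurableSet A) :
    Tendsto (fun k => μ (symmDiff (shiftMap^[hseq b k] '' A) A)) atTop (𝓝 0) := by
  have hmis := mismatch_tendsto b a hb ha1 ha2 μ hprob hsupp hinv
  refine (pre_tendsto b μ hprob hinv hmis A hA).congr fun k => ?_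
  set h := hseq b k
  have himg : shiftMap^[h] '' A = (fun (x : ℤ → ℕ) (i : ℤ) => x (i - h)) ⁻¹' A := by
    refine Set.image_eq_preimage_of_inverse ?_ ?_ |> fun e => congrFun e A
    · intro x; funext i; simp [iter_shift]
    · intro x; rw [iter_shift]; funext i; simp
  have hmeas : MeasurableSet (shiftMap^[h] '' A) := by
    rw [himg]
    exact (measurable_pi_lambda _ fun i => measurable_pi_apply _) hA
  have hinj : Function.Injective (shiftMap^[h]) := by
    intro x y hxy
    funext i
    have := congrFun hxy (i - h)
    simpa [iter_shift] using this
  rw [← (hinv.iterate h).measure_preimage (hmeas.symmDiff hA).nullMeasurableSet,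
    Set.preimage_symmDiff, Set.preimage_image_eq _ hinj, symmDiff_comm]
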